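/- Define the real polynomials P(Z,T) = 1 + 12T + 24T² + 16T³ + 36TZ + 48T²Z − 6Z² + 36TZ² + 24T²Z² + 8Z³ + 60TZ³ − 3Z⁴ and Q(Z,T) = 24T² + 16T³ + 60TZ + 48T²Z − 3Z² + 36TZ² + 24T²Z² + 8Z³ + 36TZ³ − 6Z⁴ + 12TZ⁴ + Z⁶. Then the semi-algebraic set S = {(Z,T) ∈ ℝ² : 0 ≤ Z ≤ 1, 0 ≤ T ≤ 1, P(Z,T)·Q(Z,T) = 0} is homeomorphic to the closed unit interval [0,1]. -/

import Mathlib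

/-- The first cubic factor in equation (11) of the paper. -/
def stabP (Z T : ℝ) : ℝ :=
  1 + 12 * T + 24 * T ^ 2 + 16 * T ^ 3 + 36 * T * Z + 48 * T ^ 2 * Z - 6 * Z ^ 2 +
    36 * T * Z ^ 2 + 24 * T ^ 2 * Z ^ 2 + 8 * Z ^ 3 + 60 * T * Z ^ 3 - 3 * Z ^ 4

/-- The second cubic factor in equation (11) of the paper. -/
def stabQ (Z T : ℝ) : ℝ :=
  24 * T ^ 2 + 16 * T ^ 3 + 60 * T * Z + 48 * T ^ 2 * Z - 3 * Z ^ 2 + 36 * T * Z ^ 2 +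
    24 * T ^ 2 * Z ^ 2 + 8 * Z ^ 3 + 36 * T * Z ^ 3 - 6 * Z ^ 4 + 12 * T * Z ^ 4 + Z ^ 6

theorem stabQ_strict {Z a b : ℝ} (hZ : 0 ≤ Z) (ha : 0 ≤ a) (hab : a < b) :
    stabQ Z a < stabQ Z b := by
  have h2 : a ^ 2 < b ^ 2 := by gcongr
  have h3 : a ^ 3 < b ^ 3 := by gcongr
  have e1 : 0 ≤ (b - a) * (60 * Z + 36 * Z ^ 2 + 36 * Z ^ 3 + 12 * Z ^ 4) :=
    mul_nonneg (by linarith) (by positivity)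
  have e2 : 0 ≤ (b ^ 2 - a ^ 2) * (24 + 48 * Z + 24 * Z ^ 2) :=
    mul_nonneg (by linarith) (by positivity)
  unfold stabQ
  linarith

theorem stabP_zero {Z T : ℝ} (hZ : 0 ≤ Z) (hZ1 : Z ≤ 1) (hT : 0 ≤ T)
    (h : stabP Z T = 0) : Z = 1 ∧ T = 0 := by
  have e0 : 0 ≤ (1 - Z) ^ 3 * (1 + 3 * Z) :=
    mul_nonneg (pow_nonneg (by linarith) 3) (by positivity)
  have e1 : 0 ≤ 24 * T ^ 2 + 16 * T ^ 3 + 36 * T * Z + 48 * T ^ 2 * Z + 36 * T * Z ^ 2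
    + 24 * T ^ 2 * Z ^ 2 + 60 * T * Z ^ 3 := by positivity
  have e2 : stabP Z T = (1 - Z) ^ 3 * (1 + 3 * Z) + 12 * T + (24 * T ^ 2 + 16 * T ^ 3
    + 36 * T * Z + 48 * T ^ 2 * Z + 36 * T * Z ^ 2
    + 24 * T ^ 2 * Z ^ 2 + 60 * T * Z ^ 3) := by unfold stabP; ring
  have hT0 : T = 0 := by linarith
  refine ⟨?_, hT0⟩
  have e3 : (1 - Z) ^ 3 * (1 + 3 * Z) = 0 := by linarith
  rcases mul_eq_zero.1 e3 with h | h
  · have := pow_eq_zero_iff (three_ne_zero) |>.1 h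
    linarith
  · linarith

theorem stabPQ_zero {Z T : ℝ} (hZ : 0 ≤ Z) (hZ1 : Z ≤ 1) (hT : 0 ≤ T)
    (h : stabP Z T * stabQ Z T = 0) : stabQ Z T = 0 := by
  rcases mul_eq_zero.1 h with h | h
  · obtain ⟨rfl, rfl⟩ := stabP_zero hZ hZ1 hT h
    norm_num [stabQ]
  · exact h

theorem stabQ_exists {Z : ℝ} (hZ : 0 ≤ Z) (hZ1 : Z ≤ 1) :
    ∃ T, 0 ≤ T ∧ T ≤ 1 ∧ stabQ Z T = 0 := by
  have hc : ContinuousOn (fun T => stabQ Z T) (Set.Icc 0 1) := by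
    unfold stabQ; fun_prop
  have h0 : stabQ Z 0 ≤ 0 := by
    have e0 : 0 ≤ Z ^ 2 * ((1 - Z) ^ 3 * (Z + 3)) :=
      mul_nonneg (by positivity) (mul_nonneg (pow_nonneg (by linarith) 3) (by positivity))
    have : stabQ Z 0 = -(Z ^ 2 * ((1 - Z) ^ 3 * (Z + 3))) := by unfold stabQ; ring
    linarith
  have h1 : 0 ≤ stabQ Z 1 := by
    have : Z ^ 4 ≤ 1 := pow_le_one₀ hZ hZ1
    have : 0 ≤ 60 * Z + 48 * Z + 36 * Z ^ 2 + 21 * Z ^ 2 + 8 * Z ^ 3 + 36 * Z ^ 3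
      + 12 * Z ^ 4 + Z ^ 6 := by positivity
    unfold stabQ
    linarith
  obtain ⟨T, hT, hQ⟩ := intermediate_value_Icc zero_le_one hc ⟨h0, h1⟩
  exact ⟨T, hT.1, hT.2, hQ⟩

/-- The semi-algebraic set cut out in the unit square by `P·Q = 0` (the points of the
fundamental domain with stabilizer corresponding to `Φ = 1`) is homeomorphic to the
closed unit interval `[0,1]`. -/
theorem stabilizer_curve_homeomorphic_to_interval :
    Nonempty (({p : ℝ × ℝ | 0 ≤ p.1 ∧ p.1 ≤ 1 ∧ 0 ≤ p.2 ∧ p.2 ≤ 1 ∧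
        stabP p.1 p.2 * stabQ p.1 p.2 = 0} : Set (ℝ × ℝ)) ≃ₜ (Set.Icc (0 : ℝ) 1)) := by
  set S : Set (ℝ × ℝ) := {p : ℝ × ℝ | 0 ≤ p.1 ∧ p.1 ≤ 1 ∧ 0 ≤ p.2 ∧ p.2 ≤ 1 ∧
        stabP p.1 p.2 * stabQ p.1 p.2 = 0} with hS
  have hcl : IsClosed S := by
    have hc : Continuous fun p : ℝ × ℝ => stabP p.1 p.2 * stabQ p.1 p.2 := by
      unfold stabP stabQ; fun_prop
    exact (isClosed_le continuous_const continuous_fst).inter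
      ((isClosed_le continuous_fst continuous_const).inter
      ((isClosed_le continuous_const continuous_snd).inter
      ((isClosed_le continuous_snd continuous_const).inter
      (isClosed_eq hc continuous_const))))
  have hcomp : IsCompact S := by
    refine (isCompact_Icc (a := ((0, 0) : ℝ × ℝ)) (b := (1, 1))).of_isClosed_subset hcl ?_
    rintro ⟨z, t⟩ ⟨h1, h2, h3, h4, -⟩
    exact ⟨⟨h1, h3⟩, ⟨h2, h4⟩⟩
  haveI : CompactSpace S := isCompact_iff_compactSpace.1 hcomp
  let f : S → Set.Icc (0 : ℝ) 1 := fun p => ⟨p.1.1, p.2.1, p.2.2.1⟩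
  have hf : Continuous f := by
    apply Continuous.subtype_mk
    exact continuous_fst.comp continuous_subtype_val
  have hb : Function.Bijective f := by
    constructor
    · rintro ⟨⟨z, t⟩, h1, h2, h3, h4, h5⟩ ⟨⟨z', t'⟩, h1', h2', h3', h4', h5'⟩ h
      have hz : z = z' := congrArg Subtype.val h
      subst hz
      have q := stabPQ_zero h1 h2 h3 h5
      have q' := stabPQ_zero h1' h2' h3' h5'
      simp only at q q' h1 h3 h3'
      have ht : t = t' := by
        rcases lt_trichotomy t t' with hl | hl | hl
        · have := stabQ_strict h1 h3 hl
          linarith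
        · exact hl
        · have := stabQ_strict h1 h3' hl
          linarith
      subst ht
      rfl
    · rintro ⟨z, h1, h2⟩
      obtain ⟨t, h3, h4, hq⟩ := stabQ_exists h1 h2
      exact ⟨⟨(z, t), h1, h2, h3, h4, by simp [hq]⟩, rfl⟩
  exact ⟨Continuous.homeoOfEquivCompactToT2 (f := Equiv.ofBijective f hb) hf⟩
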